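/- arXiv:1712.04916 — 4 statements merged into one kernel-verified Lean document; each statement's English description precedes it below -/
import Mathlib

section
/- Let n ≥ 1, let g and g' be invertible 2n×2n real matrices, and let s ∈ ℂⁿ be arbitrary. Then ∫_{O(2n)} Ψ_n(s, g k (g' g'ᵀ) kᵀ gᵀ) d*k = Ψ_n(s, g gᵀ) · Ψ_n(s, g' g'ᵀ). -/
open MeasureTheory Matrix
open scoped BigOperators

noncomputable section

instance matrixMeasurableSpace {l : Type*} [Fintype l] : MeasurableSpace (Matrix l l ℝ) :=
  inferInstanceAs (MeasurableSpace (l → l → ℝ))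

/-- The orthogonal group `O(m)` as a subtype of `m × m` real matrices. -/
abbrev OG (m : ℕ) := Matrix.orthogonalGroup (Fin m) ℝ

/-- `t ^ w` for a real `t ≥ 0` and complex `w`, with the convention `0 ^ w = 0`. -/
def cpw (t : ℝ) (w : ℂ) : ℂ := if t = 0 then 0 else Complex.exp (w * Real.log t)

/-- The `2n × 2n` real antisymmetric matrix `D(a) = diag(a₁ J, …, aₙ J)`,
`J = [[0,1],[-1,0]]`. -/
def Dmat {n : ℕ} (a : Fin n → ℝ) : Matrix (Fin (2 * n)) (Fin (2 * n)) ℝ :=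
  Matrix.of fun i j =>
    if i.val / 2 = j.val / 2 then
      a ⟨i.val / 2, by have := i.isLt; omega⟩ *
        (if i.val % 2 = 0 ∧ j.val % 2 = 1 then 1
          else if i.val % 2 = 1 ∧ j.val % 2 = 0 then -1 else 0)
    else 0

/-- Vandermonde product `Δ_m(x) = ∏_{j<k} (x_k - x_j)`. -/
def vdm {m : ℕ} {R : Type*} [CommRing R] (x : Fin m → R) : R :=
  ∏ p ∈ Finset.univ.filter (fun p : Fin m × Fin m => p.1 < p.2), (x p.2 - x p.1)

/-- `s_{n+1} := -n-1` convention: the `j`-th exponent `(s_j - s_{j+1})/2 - 1`. -/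
def expo (n : ℕ) (s : Fin n → ℂ) (j : Fin n) : ℂ :=
  (s j - (if h : j.val + 1 < n then s ⟨j.val + 1, h⟩ else -(n : ℂ) - 1)) / 2 - 1

/-- The spherical-type group integral
`f_n(s,X) = ∫_{O(2n)} ∏_j det((kXkᵀ)_{[2j]})^{(s_j-s_{j+1})/2-1} d*k`. -/
def sphInt (n : ℕ) (μ : Measure (OG (2 * n))) (s : Fin n → ℂ)
    (X : Matrix (Fin (2 * n)) (Fin (2 * n)) ℝ) : ℂ :=
  ∫ k : OG (2 * n), ∏ j : Fin n,
    cpw ((((k : Matrix (Fin (2 * n)) (Fin (2 * n)) ℝ) * X *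
        (k : Matrix (Fin (2 * n)) (Fin (2 * n)) ℝ)ᵀ).submatrix
          (Fin.castLE (by have := j.isLt; omega : 2 * (j.val + 1) ≤ 2 * n))
          (Fin.castLE (by have := j.isLt; omega : 2 * (j.val + 1) ≤ 2 * n))).det)
      (expo n s j) ∂μ

/-!
For `T` lower triangular, each leading block of `T * X * Tᵀ` is the product of the corresponding
leading blocks of `T`, `X` and `Tᵀ`. Hence a product `P` of powers of leading minors satisfies
`P (T * X * Tᵀ) = P (T * Tᵀ) * P X`. Writing `h * g = T * q` with `T` lower triangular and `q`
orthogonal, the average of `P ((h * g) * (k * S * kᵀ) * (h * g)ᵀ)` over `k` is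
`P ((h * g) * (h * g)ᵀ)` times the average of `P ((q * k) * S * (q * k)ᵀ)`, in which left
invariance absorbs `q`. Fubini's theorem then allows averaging over `h` last.
-/

section LowerTriangular

variable {ι κ R : Type*} [Fintype ι] [Fintype κ] [LinearOrder ι] {e : κ → ι} {T : Matrix ι ι R}

lemma submatrix_mul_of_lowerTriangular [NonUnitalNonAssocSemiring R] {l l' : Type*}
    (hT : T.BlockTriangular OrderDual.toDual) (he : Function.Injective e)
    (hlower : IsLowerSet (Set.range e)) (M : Matrix ι l R) (f : l' → l) :
    (T * M).submatrix e f = T.submatrix e e * M.submatrix e f := by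
  ext i j
  have hzero : ∀ x ∉ Set.range e, T (e i) x * M x (f j) = 0 := fun x hx => by
    rw [hT (lt_of_not_ge fun hle => hx (hlower hle ⟨i, rfl⟩)), zero_mul]
  exact (Fintype.sum_of_injective e he _ _ hzero fun _ => rfl).symm

lemma det_submatrix_lowerTriangular_conj [CommRing R] [DecidableEq κ]
    (hT : T.BlockTriangular OrderDual.toDual) (he : Function.Injective e)
    (hlower : IsLowerSet (Set.range e)) (X : Matrix ι ι R) :
    ((T * X * Tᵀ).submatrix e e).det = (T.submatrix e e).det ^ 2 * (X.submatrix e e).det := by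
  have hblock : (T * X * Tᵀ).submatrix e e =
      T.submatrix e e * X.submatrix e e * (T.submatrix e e)ᵀ := by
    have hright : (X * Tᵀ).submatrix e e = X.submatrix e e * (T.submatrix e e)ᵀ := by
      simpa only [transpose_submatrix, transpose_mul, transpose_transpose] using
        congrArg transpose (submatrix_mul_of_lowerTriangular hT he hlower Xᵀ e)
    rw [Matrix.mul_assoc, submatrix_mul_of_lowerTriangular hT he hlower, hright, Matrix.mul_assoc]
  rw [hblock, det_mul, det_mul, det_transpose]
  ring

end LowerTriangular

section LQDecomposition

open scoped ComplexOrder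

variable {ι 𝕜 : Type*} [Fintype ι] [RCLike 𝕜]

lemma posDef_self_mul_conjTranspose [DecidableEq ι] {A : Matrix ι ι 𝕜} (hA : IsUnit A) :
    (A * Aᴴ).PosDef :=
  PosDef.mul_conjTranspose_self A (vecMul_injective_of_isUnit hA)

lemma exists_diagonal_eq_mul_conjTranspose [DecidableEq ι] {d : ι → 𝕜} (hd : ∀ i, 0 ≤ d i) :
    ∃ r : ι → 𝕜, diagonal d = diagonal r * (diagonal r)ᴴ := by
  refine ⟨fun i => (√(RCLike.re (d i)) : ℝ), ?_⟩
  rw [diagonal_conjTranspose, diagonal_mul_diagonal]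
  congr 1
  ext i
  obtain ⟨x, hx, hxd⟩ := RCLike.nonneg_iff_exists_ofReal.1 (hd i)
  simp [← hxd, ← RCLike.ofReal_mul, Real.mul_self_sqrt hx]

variable [LinearOrder ι] [LocallyFiniteOrderBot ι]

lemma posDef_ldlDiag {S : Matrix ι ι 𝕜} (hS : S.PosDef) : (LDL.diag hS).PosDef := by
  rw [LDL.diag_eq_lowerInv_conj]
  exact hS.mul_mul_conjTranspose_same
    (vecMul_injective_of_isUnit (isUnit_of_invertible (LDL.lowerInv hS)))

lemma lowerTriangular_ldlLower {S : Matrix ι ι 𝕜} (hS : S.PosDef) :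
    (LDL.lower hS).BlockTriangular OrderDual.toDual :=
  blockTriangular_inv_of_blockTriangular fun _ _ h => LDL.lowerInv_triangular hS h

lemma exists_cholesky {S : Matrix ι ι 𝕜} (hS : S.PosDef) :
    ∃ L : Matrix ι ι 𝕜, L.BlockTriangular OrderDual.toDual ∧ S = L * Lᴴ := by
  have hdiag : ∀ i, 0 < LDL.diagEntries hS i := posDef_diagonal_iff.1 (posDef_ldlDiag hS)
  obtain ⟨r, hr⟩ := exists_diagonal_eq_mul_conjTranspose fun i => (hdiag i).le
  refine ⟨LDL.lower hS * diagonal r,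
    (lowerTriangular_ldlLower hS).mul (blockTriangular_diagonal r), ?_⟩
  calc S = LDL.lower hS * LDL.diag hS * (LDL.lower hS)ᴴ := (LDL.lower_conj_diag hS).symm
    _ = LDL.lower hS * diagonal r * (LDL.lower hS * diagonal r)ᴴ := by
      rw [LDL.diag, hr, conjTranspose_mul]
      simp only [Matrix.mul_assoc]

lemma exists_lq {A : Matrix ι ι 𝕜} (hA : IsUnit A) :
    ∃ L : Matrix ι ι 𝕜, L.BlockTriangular OrderDual.toDual ∧
      ∃ q : unitaryGroup ι 𝕜, A = L * (q : Matrix ι ι 𝕜) := by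
  obtain ⟨L, hL, hAL⟩ := exists_cholesky (posDef_self_mul_conjTranspose hA)
  have hLunit : IsUnit L.det := by
    have hdet : IsUnit (L.det * Lᴴ.det) := by
      rw [← det_mul, ← hAL, ← isUnit_iff_isUnit_det]
      exact (posDef_self_mul_conjTranspose hA).isUnit
    exact isUnit_of_mul_isUnit_left hdet
  have hq : L⁻¹ * A ∈ unitaryGroup ι 𝕜 := by
    rw [mem_unitaryGroup_iff, star_eq_conjTranspose, conjTranspose_mul]
    calc L⁻¹ * A * (Aᴴ * (L⁻¹)ᴴ) = L⁻¹ * (A * Aᴴ) * (L⁻¹)ᴴ := by simp only [Matrix.mul_assoc]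
      _ = (L⁻¹ * L) * (L⁻¹ * L)ᴴ := by rw [hAL, conjTranspose_mul]; simp only [Matrix.mul_assoc]
      _ = 1 := by rw [nonsing_inv_mul L hLunit, conjTranspose_one, one_mul]
  exact ⟨L, hL, ⟨L⁻¹ * A, hq⟩, (mul_nonsing_inv_cancel_left L A hLunit).symm⟩

end LQDecomposition

section ComplexPower

lemma cpw_mul (a b : ℝ) (w : ℂ) : cpw (a * b) w = cpw a w * cpw b w := by
  by_cases ha : a = 0
  · simp [cpw, ha]
  by_cases hb : b = 0
  · simp [cpw, hb]
  simp only [cpw, mul_ne_zero ha hb, ha, hb, if_false, Real.log_mul ha hb, ← Complex.exp_add]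
  push_cast
  ring_nf

lemma continuousOn_cpw (w : ℂ) : ContinuousOn (fun t => cpw t w) {0}ᶜ := by
  have hexp : ContinuousOn (fun t : ℝ => Complex.exp (w * Real.log t)) {0}ᶜ :=
    (continuousOn_const.mul (Complex.continuous_ofReal.comp_continuousOn
      Real.continuousOn_log)).cexp
  exact hexp.congr fun t ht => if_neg ht

end ComplexPower

section LeadingMinor

variable {N : ℕ} {R : Type*} [CommRing R]

/-- The leading principal minor `det X_{[m]}`; the size `m ≤ N` is encoded as an element of
`Fin (N + 1)`. -/
def leadingMinor (m : Fin (N + 1)) (X : Matrix (Fin N) (Fin N) R) : R :=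
  (X.submatrix (Fin.castLE m.is_le) (Fin.castLE m.is_le)).det

lemma leadingMinor_one (m : Fin (N + 1)) : leadingMinor m (1 : Matrix (Fin N) (Fin N) R) = 1 := by
  rw [leadingMinor, submatrix_one _ (Fin.castLE_injective _), det_one]

lemma leadingMinor_lowerTriangular_conj (m : Fin (N + 1)) {T : Matrix (Fin N) (Fin N) R}
    (hT : T.BlockTriangular OrderDual.toDual) (X : Matrix (Fin N) (Fin N) R) :
    leadingMinor m (T * X * Tᵀ) = leadingMinor m (T * Tᵀ) * leadingMinor m X := by
  have hlower : IsLowerSet (Set.range (Fin.castLE m.is_le)) := by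
    rw [Fin.range_castLE]
    exact fun i j (hji : j.val ≤ i.val) (hi : i.val < m) => hji.trans_lt hi
  have hconj : ∀ Y, leadingMinor m (T * Y * Tᵀ) = leadingMinor m T ^ 2 * leadingMinor m Y :=
    det_submatrix_lowerTriangular_conj hT (Fin.castLE_injective _) hlower
  have hself : leadingMinor m (T * Tᵀ) = leadingMinor m T ^ 2 := by
    simpa [leadingMinor_one] using hconj 1
  rw [hconj, hself]

open scoped ComplexOrder in
lemma leadingMinor_pos {𝕜 : Type*} [RCLike 𝕜] (m : Fin (N + 1)) {X : Matrix (Fin N) (Fin N) 𝕜}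
    (hX : X.PosDef) : 0 < leadingMinor m X :=
  (hX.submatrix (Fin.castLE_injective _)).det_pos

lemma continuous_leadingMinor [TopologicalSpace R] [IsTopologicalRing R] (m : Fin (N + 1)) :
    Continuous (leadingMinor m : Matrix (Fin N) (Fin N) R → R) :=
  (continuous_id.matrix_submatrix _ _).matrix_det

end LeadingMinor

section MinorPower

variable {N : ℕ} {J : Type*} [Fintype J] (m : J → Fin (N + 1)) (w : J → ℂ)

/-- The generalized power function `∏ⱼ (det X_{[mⱼ]}) ^ wⱼ` of a real matrix `X`. The powers are
those of `cpw`: `0 ^ w = 0`, and `t ^ w = |t| ^ w` for `t < 0`. -/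
def minorPower (X : Matrix (Fin N) (Fin N) ℝ) : ℂ :=
  ∏ j, cpw (leadingMinor (m j) X) (w j)

lemma minorPower_lowerTriangular_conj {T : Matrix (Fin N) (Fin N) ℝ}
    (hT : T.BlockTriangular OrderDual.toDual) (X : Matrix (Fin N) (Fin N) ℝ) :
    minorPower m w (T * X * Tᵀ) = minorPower m w (T * Tᵀ) * minorPower m w X := by
  simp only [minorPower, leadingMinor_lowerTriangular_conj _ hT, cpw_mul,
    Finset.prod_mul_distrib]

lemma exists_orthogonal_minorPower_conj {A : Matrix (Fin N) (Fin N) ℝ} (hA : IsUnit A) :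
    ∃ q : OG N, ∀ X : Matrix (Fin N) (Fin N) ℝ, minorPower m w (A * X * Aᵀ) =
      minorPower m w (A * Aᵀ) *
        minorPower m w ((q : Matrix (Fin N) (Fin N) ℝ) * X * (q : Matrix (Fin N) (Fin N) ℝ)ᵀ) := by
  obtain ⟨L, hL, q, rfl⟩ := exists_lq hA
  refine ⟨q, fun X => ?_⟩
  have hq : (q : Matrix (Fin N) (Fin N) ℝ) * (q : Matrix (Fin N) (Fin N) ℝ)ᵀ = 1 :=
    mem_unitaryGroup_iff.1 q.2
  have hself : L * (q : Matrix (Fin N) (Fin N) ℝ) * (L * (q : Matrix (Fin N) (Fin N) ℝ))ᵀ =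
      L * Lᵀ := by
    rw [transpose_mul, Matrix.mul_assoc, ← Matrix.mul_assoc _ _ Lᵀ, hq, Matrix.one_mul]
  rw [hself, ← minorPower_lowerTriangular_conj m w hL]
  simp only [transpose_mul, Matrix.mul_assoc]

lemma continuousOn_minorPower :
    ContinuousOn (minorPower m w) {X : Matrix (Fin N) (Fin N) ℝ | X.PosDef} :=
  continuousOn_finsetProd _ fun j _ => (continuousOn_cpw (w j)).comp
    (continuous_leadingMinor (m j)).continuousOn fun _ hX => (leadingMinor_pos (m j) hX).ne'

end MinorPower

section OrthogonalGroup

variable {ι : Type*} [Fintype ι]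

instance matrixBorelSpace : BorelSpace (Matrix ι ι ℝ) :=
  inferInstanceAs (BorelSpace (ι → ι → ℝ))

instance matrixSecondCountableTopology {m n R : Type*} [Countable m] [Countable n]
    [TopologicalSpace R] [SecondCountableTopology R] : SecondCountableTopology (Matrix m n R) :=
  inferInstanceAs (SecondCountableTopology (m → n → R))

variable [DecidableEq ι]

instance orthogonalGroupBorelSpace : BorelSpace (orthogonalGroup ι ℝ) :=
  Subtype.borelSpace _

instance orthogonalGroupSecondCountableTopology :
    SecondCountableTopology (orthogonalGroup ι ℝ) :=
  TopologicalSpace.Subtype.secondCountableTopology _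

instance unitaryGroupCompactSpace {𝕜 : Type*} [RCLike 𝕜] : CompactSpace (unitaryGroup ι 𝕜) := by
  let cube : Set (Matrix ι ι 𝕜) :=
    Set.univ.pi fun _ => Set.univ.pi fun _ => Metric.closedBall 0 1
  have hcube : IsCompact cube :=
    isCompact_univ_pi fun _ => isCompact_univ_pi fun _ => isCompact_closedBall _ _
  have hclosed : IsClosed (unitaryGroup ι 𝕜 : Set (Matrix ι ι 𝕜)) := isClosed_unitary
  have hsubset : (unitaryGroup ι 𝕜 : Set (Matrix ι ι 𝕜)) ⊆ cube := fun U hU i _ j _ =>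
    mem_closedBall_zero_iff.2 (entry_norm_bound_of_unitary hU i j)
  exact isCompact_iff_compactSpace.1 (hcube.of_isClosed_subset hclosed hsubset)

end OrthogonalGroup

section SphericalIntegral

variable {N : ℕ} (μ : Measure (OG N)) {J : Type*} [Fintype J] (m : J → Fin (N + 1)) (w : J → ℂ)
  {g S : Matrix (Fin N) (Fin N) ℝ}

/-- The average `∫_{O(N)} minorPower m w (k X kᵀ) dμ(k)` of a generalized power function over the
orthogonal group. The integral `sphInt n μ s` is the case `N = 2n`, `mⱼ = 2(j + 1)` for `j : Fin n`,
`w = expo n s`. -/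
def sphericalIntegral (X : Matrix (Fin N) (Fin N) ℝ) : ℂ :=
  ∫ k : OG N, minorPower m w
    ((k : Matrix (Fin N) (Fin N) ℝ) * X * (k : Matrix (Fin N) (Fin N) ℝ)ᵀ) ∂μ

lemma integral_minorPower_conj [μ.IsMulLeftInvariant] (hg : IsUnit g)
    (X : Matrix (Fin N) (Fin N) ℝ) :
    ∫ k : OG N, minorPower m w (g * (k * X * (k : Matrix (Fin N) (Fin N) ℝ)ᵀ) * gᵀ) ∂μ =
      minorPower m w (g * gᵀ) * sphericalIntegral μ m w X := by
  obtain ⟨q, hq⟩ := exists_orthogonal_minorPower_conj m w hg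
  simp only [hq, integral_const_mul, sphericalIntegral]
  rw [← integral_mul_left_eq_self (fun k : OG N => minorPower m w
    ((k : Matrix (Fin N) (Fin N) ℝ) * X * (k : Matrix (Fin N) (Fin N) ℝ)ᵀ)) q]
  simp only [Submonoid.coe_mul, transpose_mul, Matrix.mul_assoc]

lemma integrable_minorPower_conj_conj [IsFiniteMeasure μ] (hg : IsUnit g) (hS : S.PosDef) :
    Integrable (fun p : OG N × OG N => minorPower m w
      ((p.2 * g : Matrix (Fin N) (Fin N) ℝ) * (p.1 * S * (p.1 : Matrix (Fin N) (Fin N) ℝ)ᵀ) *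
        (p.2 * g : Matrix (Fin N) (Fin N) ℝ)ᵀ)) (μ.prod μ) := by
  have hconj {A X : Matrix (Fin N) (Fin N) ℝ} (hX : X.PosDef) (hA : IsUnit A) :
      (A * X * Aᵀ).PosDef := hX.mul_mul_conjTranspose_same (vecMul_injective_of_isUnit hA)
  refine Continuous.integrable_of_hasCompactSupport ?_ (HasCompactSupport.of_compactSpace _)
  refine (continuousOn_minorPower m w).comp_continuous ?_ fun p =>
    hconj (hconj hS Unitary.isUnit_coe) (Unitary.isUnit_coe.mul hg)
  fun_prop

theorem spherical_factorization_Psi_general [IsFiniteMeasure μ] [μ.IsMulLeftInvariant]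
    (hg : IsUnit g) (hS : S.PosDef) :
    ∫ k : OG N, sphericalIntegral μ m w
        (g * k * S * (k : Matrix (Fin N) (Fin N) ℝ)ᵀ * gᵀ) ∂μ =
      sphericalIntegral μ m w (g * gᵀ) * sphericalIntegral μ m w S :=
  calc ∫ k : OG N, sphericalIntegral μ m w (g * k * S * (k : Matrix (Fin N) (Fin N) ℝ)ᵀ * gᵀ) ∂μ
      = ∫ k : OG N, ∫ h : OG N, minorPower m w ((h * g : Matrix (Fin N) (Fin N) ℝ) *
          (k * S * (k : Matrix (Fin N) (Fin N) ℝ)ᵀ) *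
            (h * g : Matrix (Fin N) (Fin N) ℝ)ᵀ) ∂μ ∂μ := by
        simp only [sphericalIntegral, transpose_mul, Matrix.mul_assoc]
    _ = ∫ h : OG N, ∫ k : OG N, minorPower m w ((h * g : Matrix (Fin N) (Fin N) ℝ) *
          (k * S * (k : Matrix (Fin N) (Fin N) ℝ)ᵀ) *
            (h * g : Matrix (Fin N) (Fin N) ℝ)ᵀ) ∂μ ∂μ :=
        integral_integral_swap (integrable_minorPower_conj_conj μ m w hg hS)
    _ = ∫ h : OG N, minorPower m w ((h * g : Matrix (Fin N) (Fin N) ℝ) *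
          (h * g : Matrix (Fin N) (Fin N) ℝ)ᵀ) * sphericalIntegral μ m w S ∂μ := by
        simp only [integral_minorPower_conj μ m w (Unitary.isUnit_coe.mul hg)]
    _ = sphericalIntegral μ m w (g * gᵀ) * sphericalIntegral μ m w S := by
        simp only [integral_mul_const, sphericalIntegral, transpose_mul, Matrix.mul_assoc]

end SphericalIntegral

/-- Lemma 2.5, Eq. (2.15): factorization
`∫_K Ψ_n(s, g k (g'g'ᵀ) kᵀ gᵀ) d*k = Ψ_n(s, ggᵀ) Ψ_n(s, g'g'ᵀ)`. -/
theorem spherical_factorization_Psi (n : ℕ) (hn : 1 ≤ n)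
    (μ : Measure (OG (2 * n))) (hμ : μ.IsHaarMeasure) (hμ1 : IsProbabilityMeasure μ)
    (g g' : Matrix (Fin (2 * n)) (Fin (2 * n)) ℝ) (hg : IsUnit g) (hg' : IsUnit g')
    (s : Fin n → ℂ) :
    (∫ k : OG (2 * n),
        sphInt n μ s (g * (k : Matrix (Fin (2 * n)) (Fin (2 * n)) ℝ) * (g' * g'ᵀ) *
          (k : Matrix (Fin (2 * n)) (Fin (2 * n)) ℝ)ᵀ * gᵀ) ∂μ) =
      sphInt n μ s (g * gᵀ) * sphInt n μ s (g' * g'ᵀ) :=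
  spherical_factorization_Psi_general μ
    (fun j : Fin n => ⟨2 * (j + 1), by have := j.isLt; omega⟩) (expo n s) hg
    (posDef_self_mul_conjTranspose hg')

end
end

section
/- Let n ≥ 1 and let w_1,…,w_n : (0,∞) → ℝ be measurable functions with ∫₀^∞ t^{u−1}|w_b(t)| dt < ∞ for every u ∈ [1, 2n−1] and every b. Then: (i) ∫_{(0,∞)ⁿ} Δ_n(a²) · det[w_b(a_c)]_{b,c=1..n} da = n! · det[Mw_c(2b−1)]_{b,c=1..n}; and (ii) for every s ∈ ℂⁿ with pairwise distinct entries satisfying Re(s_b) ∈ [n, 3n−2] for all b, (∏_{j=0}^{n−1} 2^j·j!) · ∫_{(0,∞)ⁿ} Δ_n(a²) det[w_b(a_c)]_{b,c} · (∏_j a_j)^{−(2n−1)} · det[a_c^{s_b+n−1}]_{b,c} / (Δ_n(a²)·Δ_n(s_1,…,s_n)) da = n!·(∏_{j=0}^{n−1} 2^j·j!) · det[Mw_c(s_b − n + 1)]_{b,c=1..n} / Δ_n(s_1,…,s_n). -/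
open MeasureTheory Matrix
open scoped BigOperators

noncomputable section

/-- Real Mellin transform `Mw(u) = ∫₀^∞ w(t) t^{u-1} dt`. -/
def mellinR (w : ℝ → ℝ) (u : ℝ) : ℝ := ∫ t in Set.Ioi (0 : ℝ), w t * t ^ (u - 1)

/-- Complex Mellin transform `Mw(u) = ∫₀^∞ w(t) t^{u-1} dt`, `u ∈ ℂ`. -/
def mellinC (w : ℝ → ℝ) (u : ℂ) : ℂ := ∫ t in Set.Ioi (0 : ℝ), (w t : ℂ) * cpw t (u - 1)

/-!
Andréief's identity: expanding one of two determinants over permutations, absorbing each product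
into the columns of the other and integrating column by column gives
`∫ det (f_b (x_c)) det (g_b (x_c)) = n! det (∫ f_b g_c)`. On the positive orthant with
`f_b t = t ^ (z_b - 1)` the right-hand side is a determinant of Mellin transforms. The two parts are
the cases `z_b = 2b - 1`, where `det (f_b (a_c)) = Δ_n(a²)`, and `z_b = s_b - n + 1`, where the
factor `(∏ a_j) ^ (-(2n - 1))` turns the exponents `s_b + n - 1` into `s_b - n`.
-/

section Andreief

variable {ι 𝕜 : Type*} [Fintype ι] [DecidableEq ι] [RCLike 𝕜]

theorem integral_pi_det {E : ι → Type*} [∀ i, MeasurableSpace (E i)]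
    (μ : ∀ i, Measure (E i)) [∀ i, SigmaFinite (μ i)] {h : ι → ∀ i, E i → 𝕜}
    (hh : ∀ b c, Integrable (h b c) (μ c)) :
    ∫ x, (of fun b c => h b c (x c)).det ∂Measure.pi μ =
      (of fun b c => ∫ t, h b c t ∂μ c).det := by
  simp only [det_apply', of_apply]
  rw [integral_finsetSum _ fun σ _ =>
    (Integrable.fintype_prod_dep fun c => hh (σ c) c).const_mul _]
  simp only [integral_const_mul, integral_fintype_prod_eq_prod]

theorem integrable_pi_det {E : ι → Type*} [∀ i, MeasurableSpace (E i)]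
    (μ : ∀ i, Measure (E i)) [∀ i, SigmaFinite (μ i)] {h : ι → ∀ i, E i → 𝕜}
    (hh : ∀ b c, Integrable (h b c) (μ c)) :
    Integrable (fun x => (of fun b c => h b c (x c)).det) (Measure.pi μ) := by
  simp only [det_apply', of_apply]
  exact integrable_finsetSum _ fun σ _ =>
    (Integrable.fintype_prod_dep fun c => hh (σ c) c).const_mul _

theorem det_mul_det_eq_sum_perm {R : Type*} [CommRing R] (A B : Matrix ι ι R) :
    A.det * B.det =
      ∑ τ : Equiv.Perm ι, (Equiv.Perm.sign τ : R) * (of fun b c => A b c * B (τ c) c).det := by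
  rw [det_apply' B, Finset.mul_sum]
  refine Finset.sum_congr rfl fun τ _ => ?_
  simp only [mul_comm (A _ _), det_mul_row]
  ring

theorem integral_pi_det_mul_det {α : Type*} [MeasurableSpace α] (μ : Measure α) [SigmaFinite μ]
    {f g : ι → α → 𝕜} (hfg : ∀ b c, Integrable (fun t => f b t * g c t) μ) :
    ∫ x, (of fun b c => f b (x c)).det * (of fun b c => g b (x c)).det ∂Measure.pi (fun _ => μ) =
      ((Fintype.card ι).factorial : 𝕜) * (of fun b c => ∫ t, f b t * g c t ∂μ).det := by
  set M : Matrix ι ι 𝕜 := of fun b c => ∫ t, f b t * g c t ∂μ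
  have hcol (τ : Equiv.Perm ι) (b c : ι) : Integrable (fun t => f b t * g (τ c) t) μ :=
    hfg b (τ c)
  calc
    _ = ∑ τ : Equiv.Perm ι, (Equiv.Perm.sign τ : 𝕜) *
          (of fun b c => ∫ t, f b t * g (τ c) t ∂μ).det := by
      simp only [det_mul_det_eq_sum_perm, of_apply]
      rw [integral_finsetSum _ fun τ _ =>
        (integrable_pi_det _ (hcol τ)).const_mul _]
      simp only [integral_const_mul, integral_pi_det _ (hcol _)]
    _ = ∑ τ : Equiv.Perm ι, (Equiv.Perm.sign τ : 𝕜) * (M.submatrix id τ).det := rfl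
    _ = ∑ _τ : Equiv.Perm ι, M.det := by
      refine Finset.sum_congr rfl fun τ _ => ?_
      rw [det_permute', ← mul_assoc, ← Int.cast_mul, ← Units.val_mul, Int.units_mul_self,
        Units.val_one, Int.cast_one, one_mul]
    _ = _ := by
      rw [Finset.sum_const, Finset.card_univ, Fintype.card_perm, nsmul_eq_mul]

end Andreief

section PositiveOrthant

variable {ι : Type*}

theorem setOf_forall_pos_eq_pi : {a : ι → ℝ | ∀ j, 0 < a j} = Set.univ.pi fun _ => Set.Ioi 0 := by
  ext a
  simp only [Set.mem_ofPred_eq, Set.mem_univ_pi, Set.mem_Ioi]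

theorem measurableSet_setOf_forall_pos [Countable ι] :
    MeasurableSet {a : ι → ℝ | ∀ j, 0 < a j} := by
  rw [setOf_forall_pos_eq_pi]
  exact MeasurableSet.univ_pi fun _ => measurableSet_Ioi

theorem setIntegral_forall_pos_det_cpow_mul_det [Fintype ι] [DecidableEq ι] (z : ι → ℂ)
    {w : ι → ℝ → ℂ} (hw : ∀ b c, MellinConvergent (w c) (z b)) :
    ∫ a in {a : ι → ℝ | ∀ j, 0 < a j},
        (of fun b c => (a c : ℂ) ^ (z b - 1)).det * (of fun b c => w b (a c)).det =
      ((Fintype.card ι).factorial : ℂ) * (of fun b c => mellin (w c) (z b)).det := by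
  rw [setOf_forall_pos_eq_pi, volume_pi, Measure.restrict_pi_pi]
  exact integral_pi_det_mul_det (f := fun b (t : ℝ) => (t : ℂ) ^ (z b - 1)) _ hw

end PositiveOrthant

section ComplexPower

theorem cpw_eq_cpow {t : ℝ} (ht : 0 < t) (z : ℂ) : cpw t z = (t : ℂ) ^ z := by
  rw [cpw, if_neg ht.ne', Complex.cpow_def_of_ne_zero (Complex.ofReal_ne_zero.2 ht.ne'),
    Complex.ofReal_log ht.le, mul_comm]

theorem prod_rpow_mul_det_cpw {ι : Type*} [Fintype ι] [DecidableEq ι] {a : ι → ℝ}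
    (ha : ∀ j, 0 < a j) (r : ℝ) (z : ι → ℂ) :
    (((∏ j, a j) ^ r : ℝ) : ℂ) * (of fun b c => cpw (a c) (z b)).det =
      (of fun b c => (a c : ℂ) ^ (r + z b)).det := by
  rw [← Real.finsetProd_rpow _ _ fun j _ => (ha j).le, Complex.ofReal_prod, ← det_mul_row]
  congr 1
  ext b c
  rw [of_apply, of_apply, of_apply, cpw_eq_cpow (ha c), Complex.ofReal_cpow (ha c).le,
    ← Complex.cpow_add _ _ (Complex.ofReal_ne_zero.2 (ha c).ne')]

end ComplexPower

section Vandermonde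

variable {m : ℕ} {R : Type*} [CommRing R]

theorem vdm_eq_det_vandermonde (x : Fin m → R) : vdm x = (vandermonde x).det := by
  rw [det_vandermonde]
  exact Finset.prod_finset_product' _ _ _ (by simp) (f := fun i j => x j - x i)

theorem ofReal_vdm_sq (a : Fin m → ℝ) :
    ((vdm fun j => a j ^ 2 : ℝ) : ℂ) = vdm fun j => (a j : ℂ) ^ 2 := by
  simp only [vdm, Complex.ofReal_prod, Complex.ofReal_sub, Complex.ofReal_pow]

theorem vdm_sq_eq_det_cpow (a : Fin m → ℝ) :
    (vdm fun j => (a j : ℂ) ^ 2) =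
      (of fun b c : Fin m => (a c : ℂ) ^ (2 * ((b : ℕ) + 1 : ℂ) - 1 - 1)).det := by
  rw [vdm_eq_det_vandermonde, ← det_transpose]
  congr 1
  ext b c
  rw [transpose_apply, vandermonde_apply, of_apply, ← pow_mul, ← Complex.cpow_natCast]
  congr 1
  push_cast
  ring

theorem det_of_column_eq_zero_of_vdm_sq_eq_zero {a : Fin m → ℝ} (ha : ∀ j, 0 < a j)
    (h : (vdm fun j => (a j : ℂ) ^ 2) = 0) (w : Fin m → ℝ → R) :
    (of fun b c => w b (a c)).det = 0 := by
  rw [vdm_eq_det_vandermonde, det_vandermonde_eq_zero_iff] at h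
  obtain ⟨i, j, hsq, hij⟩ := h
  have haij : a i = a j :=
    (pow_left_inj₀ (ha i).le (ha j).le two_ne_zero).1 (by exact_mod_cast hsq)
  exact det_zero_of_column_eq hij fun k => by rw [of_apply, of_apply, haij]

end Vandermonde

section RealWeights

theorem ofReal_det {ι : Type*} [Fintype ι] [DecidableEq ι] (A : ι → ι → ℝ) :
    (((of A).det : ℝ) : ℂ) = (of fun b c => (A b c : ℂ)).det :=
  Complex.ofRealHom.map_det (of A)

theorem mellinC_eq_mellin (w : ℝ → ℝ) (z : ℂ) :
    mellinC w z = mellin (fun t => (w t : ℂ)) z := by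
  refine setIntegral_congr_fun measurableSet_Ioi fun t ht => ?_
  simp only [cpw_eq_cpow ht, smul_eq_mul, mul_comm]

theorem ofReal_mellinR (w : ℝ → ℝ) (u : ℝ) :
    (mellinR w u : ℂ) = mellin (fun t => (w t : ℂ)) u := by
  rw [mellinR, ← integral_complex_ofReal]
  refine setIntegral_congr_fun measurableSet_Ioi fun t ht => ?_
  simp only [Complex.ofReal_mul, Complex.ofReal_cpow (le_of_lt ht), Complex.ofReal_sub,
    Complex.ofReal_one, smul_eq_mul, mul_comm]

theorem mellinConvergent_ofReal {w : ℝ → ℝ} {z : ℂ}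
    (hwm : AEStronglyMeasurable w (volume.restrict (Set.Ioi 0)))
    (hw : IntegrableOn (fun t : ℝ => t ^ (z.re - 1) * |w t|) (Set.Ioi 0)) :
    MellinConvergent (fun t => (w t : ℂ)) z := by
  refine (mellin_convergent_iff_norm subset_rfl measurableSet_Ioi
    (Complex.continuous_ofReal.comp_aestronglyMeasurable hwm)).2 ?_
  simpa only [Function.comp_apply, Complex.norm_real, Real.norm_eq_abs] using hw

theorem two_mul_succ_sub_one_re_mem_Icc {n : ℕ} (b : Fin n) :
    (2 * ((b : ℕ) + 1 : ℂ) - 1).re ∈ Set.Icc (1 : ℝ) (2 * (n : ℝ) - 1) := by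
  have hre : (2 * ((b : ℕ) + 1 : ℂ) - 1).re = 2 * ((b : ℕ) + 1 : ℝ) - 1 := by simp
  have hb : ((b : ℕ) : ℝ) + 1 ≤ n := by exact_mod_cast b.2
  rw [hre]
  constructor <;> linarith [Nat.cast_nonneg (α := ℝ) (b : ℕ)]

theorem sub_add_one_re_mem_Icc {n : ℕ} {z : ℂ}
    (hz : z.re ∈ Set.Icc (n : ℝ) (3 * (n : ℝ) - 2)) :
    (z - n + 1).re ∈ Set.Icc (1 : ℝ) (2 * (n : ℝ) - 1) := by
  rw [Complex.add_re, Complex.sub_re, Complex.natCast_re, Complex.one_re]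
  constructor <;> linarith [hz.1, hz.2]

end RealWeights

theorem setIntegral_vdm_sq_mul_det {n : ℕ} {w : Fin n → ℝ → ℂ}
    (hw : ∀ b c : Fin n, MellinConvergent (w c) (2 * ((b : ℕ) + 1 : ℂ) - 1)) :
    ∫ a in {a : Fin n → ℝ | ∀ j, 0 < a j},
        (vdm fun j => (a j : ℂ) ^ 2) * (of fun b c => w b (a c)).det =
      (n.factorial : ℂ) *
        (of fun b c : Fin n => mellin (w c) (2 * ((b : ℕ) + 1 : ℂ) - 1)).det := by
  simp only [vdm_sq_eq_det_cpow]
  rw [setIntegral_forall_pos_det_cpow_mul_det _ hw, Fintype.card_fin]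

theorem setIntegral_vdm_sq_mul_det_mul_det_div {n : ℕ} {w : Fin n → ℝ → ℂ} {s : Fin n → ℂ}
    (hw : ∀ b c, MellinConvergent (w c) (s b - n + 1)) :
    ∫ a in {a : Fin n → ℝ | ∀ j, 0 < a j},
        (vdm fun j => (a j : ℂ) ^ 2) * (of fun b c => w b (a c)).det *
            (((∏ j, a j) ^ (-(2 * (n : ℝ) - 1)) : ℝ) : ℂ) *
          (of fun b c => cpw (a c) (s b + n - 1)).det / (vdm fun j => (a j : ℂ) ^ 2) =
      (n.factorial : ℂ) * (of fun b c => mellin (w c) (s b - n + 1)).det := by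
  have handreief := setIntegral_forall_pos_det_cpow_mul_det _ hw
  rw [Fintype.card_fin] at handreief
  rw [← handreief]
  refine setIntegral_congr_fun measurableSet_setOf_forall_pos fun a ha => ?_
  have hexp (b : Fin n) :
      ((-(2 * (n : ℝ) - 1) : ℝ) : ℂ) + (s b + n - 1) = s b - n + 1 - 1 := by
    push_cast
    ring
  simp only [mul_assoc, prod_rpow_mul_det_cpw ha, hexp]
  -- Where two coordinates agree the quotient is `0 / 0 = 0`, but there `det (w_b (a_c)) = 0` too.
  rw [mul_div_cancel_left_of_imp, mul_comm]
  intro hv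
  rw [det_of_column_eq_zero_of_vdm_sq_eq_zero ha hv w, zero_mul]

theorem polynomial_ensemble_transform_general (n : ℕ) (w : Fin n → ℝ → ℂ) :
    ((∀ b c : Fin n, MellinConvergent (w c) (2 * ((b : ℕ) + 1 : ℂ) - 1)) →
      ∫ a in {a : Fin n → ℝ | ∀ j, 0 < a j},
          (vdm fun j => (a j : ℂ) ^ 2) * (of fun b c => w b (a c)).det =
        (n.factorial : ℂ) *
          (of fun b c : Fin n => mellin (w c) (2 * ((b : ℕ) + 1 : ℂ) - 1)).det) ∧
    (∀ s : Fin n → ℂ, Function.Injective s →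
      (∀ b c, MellinConvergent (w c) (s b - n + 1)) →
      ((∏ j ∈ Finset.range n, 2 ^ j * Nat.factorial j : ℕ) : ℂ) *
          ∫ a in {a : Fin n → ℝ | ∀ j, 0 < a j},
            (vdm fun j => (a j : ℂ) ^ 2) * (of fun b c => w b (a c)).det *
                (((∏ j, a j) ^ (-(2 * (n : ℝ) - 1)) : ℝ) : ℂ) *
              (of fun b c => cpw (a c) (s b + n - 1)).det /
                ((vdm fun j => (a j : ℂ) ^ 2) * vdm s) =
        (n.factorial : ℂ) * ((∏ j ∈ Finset.range n, 2 ^ j * Nat.factorial j : ℕ) : ℂ) *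
          (of fun b c => mellin (w c) (s b - n + 1)).det / vdm s) := by
  refine ⟨setIntegral_vdm_sq_mul_det, fun s _ hs => ?_⟩
  simp only [← div_div]
  rw [integral_div, setIntegral_vdm_sq_mul_det_mul_det_div hs]
  ring

/-- Proposition 3.1, Andréief-type identities: normalization of a
polynomial ensemble on `H` and the spherical transform of a polynomial ensemble. -/
theorem polynomial_ensemble_transform (n : ℕ) (hn : 1 ≤ n)
    (w : Fin n → ℝ → ℝ) (hwm : ∀ b, Measurable (w b))
    (hwint : ∀ u ∈ Set.Icc (1 : ℝ) (2 * (n : ℝ) - 1), ∀ b,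
      IntegrableOn (fun t : ℝ => t ^ (u - 1) * |w b t|) (Set.Ioi 0)) :
    ((∫ a in {a : Fin n → ℝ | ∀ j, 0 < a j},
        (vdm fun j => (a j) ^ 2) * (Matrix.of fun b c : Fin n => w b (a c)).det) =
      (Nat.factorial n : ℝ) *
        (Matrix.of fun b c : Fin n => mellinR (w c) (2 * ((b : ℕ) + 1 : ℝ) - 1)).det) ∧
    (∀ s : Fin n → ℂ, Function.Injective s →
      (∀ b : Fin n, (s b).re ∈ Set.Icc (n : ℝ) (3 * (n : ℝ) - 2)) →
      ((∏ j ∈ Finset.range n, 2 ^ j * Nat.factorial j : ℕ) : ℂ) *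
          ∫ a in {a : Fin n → ℝ | ∀ j, 0 < a j},
            (((vdm fun j => (a j) ^ 2) * (Matrix.of fun b c : Fin n => w b (a c)).det *
                (∏ j, a j) ^ (-(2 * (n : ℝ) - 1)) : ℝ) : ℂ) *
              (Matrix.of fun b c : Fin n => cpw (a c) (s b + (n : ℂ) - 1)).det /
                (((vdm fun j => (a j) ^ 2 : ℝ) : ℂ) * vdm s) =
        (Nat.factorial n : ℂ) * ((∏ j ∈ Finset.range n, 2 ^ j * Nat.factorial j : ℕ) : ℂ) *
          (Matrix.of fun b c : Fin n => mellinC (w c) (s b - (n : ℂ) + 1)).det / vdm s) := by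
  have hconv (z : ℂ) (hz : z.re ∈ Set.Icc (1 : ℝ) (2 * (n : ℝ) - 1)) (c : Fin n) :
      MellinConvergent (fun t => (w c t : ℂ)) z :=
    mellinConvergent_ofReal (hwm c).aestronglyMeasurable (hwint _ hz c)
  obtain ⟨hnormalization, htransform⟩ :=
    polynomial_ensemble_transform_general n fun b t => (w b t : ℂ)
  refine ⟨Complex.ofReal_injective ?_, fun s hs hre => ?_⟩
  · rw [← integral_complex_ofReal]
    simpa [ofReal_vdm_sq, ofReal_det, ofReal_mellinR] using
      hnormalization fun b => hconv _ (two_mul_succ_sub_one_re_mem_Icc b)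
  · simpa only [Complex.ofReal_mul, ofReal_vdm_sq, ofReal_det, mellinC_eq_mellin] using
      htransform s hs fun b => hconv _ (sub_add_one_re_mem_Icc (hre b))

end
end

section
/- Let n ≥ 1, let a_1,…,a_n be pairwise distinct positive reals, and let h : (0,∞) → [0,∞) be integrable with 0 < Mh(2m+1) < ∞ for m = 0,…,n−1. For each k = 1,…,n write ∏_{i≠k} (a_i² − y²)/(a_i² − a_k²) = Σ_{m=0}^{n−1} d_{km} y^{2m} and define p_k(y) := Σ_{m=0}^{n−1} (d_{km}/Mh(2m+1)) y^{2m} and q_l(y) := (1/a_l)·h(y/a_l). Then ∫₀^∞ p_k(y)·q_l(y) dy = δ_{kl} for all 1 ≤ k,l ≤ n. -/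
open MeasureTheory
open scoped BigOperators

noncomputable section

/-- Mellin transform `Mh(u) = ∫₀^∞ h(t) t^{u-1} dt`. -/
def mellH (h : ℝ → ℝ) (u : ℝ) : ℝ := ∫ t in Set.Ioi (0 : ℝ), h t * t ^ (u - 1)

/-!
Substituting `y = a t` turns `∫ y ^ m * (1 / a) h (y / a)` into `a ^ m` times the `m`-th moment of
`h`. Once every coefficient of a polynomial is divided by the moment of the same degree, integrating
it against the dilate of `h` by `a` is therefore evaluation of the original polynomial at `a`. The
polynomials in question are the Lagrange basis polynomials at the nodes `a i ^ 2`, composed with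
squaring, so their values at the `a l` form the identity matrix.
-/

section Lagrange

variable {ι F : Type*} [DecidableEq ι] [Field F]

theorem eval_lagrange_basis_eq_prod (s : Finset ι) (v : ι → F) (k : ι) (x : F) :
    (Lagrange.basis s v k).eval x = ∏ i ∈ s.erase k, (v i - x) / (v i - v k) := by
  rw [Lagrange.basis, Polynomial.eval_prod]
  refine Finset.prod_congr rfl fun i _ => ?_
  rw [Lagrange.basisDivisor, Polynomial.eval_mul, Polynomial.eval_C, Polynomial.eval_sub,
    Polynomial.eval_X, Polynomial.eval_C, inv_mul_eq_div, ← neg_sub (v i) x,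
    ← neg_sub (v i) (v k), neg_div_neg_eq]

theorem prod_erase_sub_div_sub_eq_ite {s : Finset ι} {v : ι → F} (hv : Set.InjOn v s) {k l : ι}
    (hk : k ∈ s) (hl : l ∈ s) :
    ∏ i ∈ s.erase k, (v i - v l) / (v i - v k) = if k = l then 1 else 0 := by
  rw [← eval_lagrange_basis_eq_prod]
  split_ifs with hkl
  · rw [← hkl, Lagrange.eval_basis_self hv hk]
  · exact Lagrange.eval_basis_of_ne hkl hl

end Lagrange

section Moments

variable {𝕜 ι : Type*} [RCLike 𝕜]

/-- The `m`-th moment of `h` over the positive half-line, that is `Mh(m + 1)`, with a natural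
exponent and for real or complex `h`. -/
def halfLineMoment (h : ℝ → 𝕜) (m : ℕ) : 𝕜 := ∫ t in Set.Ioi (0 : ℝ), t ^ m • h t

theorem mellH_natCast_add_one (h : ℝ → ℝ) (m : ℕ) : mellH h (m + 1) = halfLineMoment h m := by
  simp only [mellH, halfLineMoment, add_sub_cancel_right, Real.rpow_natCast, smul_eq_mul, mul_comm]

theorem mellH_two_mul_add_one (h : ℝ → ℝ) (m : ℕ) :
    mellH h (2 * m + 1) = halfLineMoment h (2 * m) := by
  exact_mod_cast mellH_natCast_add_one h (2 * m)

theorem integral_Ioi_mul_dilation (g h : ℝ → 𝕜) {a : ℝ} (ha : 0 < a) :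
    ∫ y in Set.Ioi (0 : ℝ), g y * ((1 / a) • h (y / a)) =
      ∫ t in Set.Ioi (0 : ℝ), g (a * t) * h t := by
  have subst_mul := integral_comp_mul_left_Ioi (fun y => g y * h (y / a)) 0 ha
  simp only [mul_zero, mul_div_cancel_left₀ _ ha.ne'] at subst_mul
  simp only [subst_mul, mul_smul_comm, integral_smul, one_div]

theorem integral_sum_div_halfLineMoment_mul_dilation {s : Finset ι} {e : ι → ℕ} {h : ℝ → 𝕜}
    (hmoment : ∀ m ∈ s, halfLineMoment h (e m) ≠ 0) (c : ι → 𝕜) {a : ℝ} (ha : 0 < a) :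
    ∫ y in Set.Ioi (0 : ℝ),
        (∑ m ∈ s, y ^ e m • (c m / halfLineMoment h (e m))) * ((1 / a) • h (y / a)) =
      ∑ m ∈ s, a ^ e m • c m := by
  -- A nonzero integral is that of an integrable function: otherwise it is `0` by convention.
  have moment_integrable (m) (hm : m ∈ s) : IntegrableOn (fun t => t ^ e m • h t) (Set.Ioi 0) :=
    Integrable.of_integral_ne_zero (hmoment m hm)
  calc
    _ = ∫ t in Set.Ioi (0 : ℝ),
          (∑ m ∈ s, (a * t) ^ e m • (c m / halfLineMoment h (e m))) * h t :=
        integral_Ioi_mul_dilation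
          (fun y => ∑ m ∈ s, y ^ e m • (c m / halfLineMoment h (e m))) h ha
    _ = ∫ t in Set.Ioi (0 : ℝ),
          ∑ m ∈ s, a ^ e m • (c m / halfLineMoment h (e m)) * t ^ e m • h t := by
        simp only [Finset.sum_mul, mul_pow, smul_mul_assoc, mul_smul_comm, smul_smul,
          mul_comm (a ^ _)]
    _ = ∑ m ∈ s, a ^ e m • (c m / halfLineMoment h (e m)) * halfLineMoment h (e m) := by
        rw [integral_finsetSum s fun m hm => (moment_integrable m hm).const_mul _]
        simp only [integral_const_mul, halfLineMoment]
    _ = ∑ m ∈ s, a ^ e m • c m :=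
        Finset.sum_congr rfl fun m hm => by rw [smul_mul_assoc, div_mul_cancel₀ _ (hmoment m hm)]

theorem biorthonormal_fixed_matrix_general {n : ℕ} {a : Fin n → ℝ} (ha : ∀ j, 0 < a j)
    (ha' : Function.Injective a) {h : ℝ → 𝕜}
    (hmoment : ∀ m : Fin n, halfLineMoment h (2 * m) ≠ 0) {d : Fin n → Fin n → ℝ}
    (hd : ∀ (k : Fin n) (y : ℝ),
      ∏ i ∈ Finset.univ.erase k, (a i ^ 2 - y ^ 2) / (a i ^ 2 - a k ^ 2) =
        ∑ m : Fin n, d k m * y ^ (2 * m.val))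
    (k l : Fin n) :
    ∫ y in Set.Ioi (0 : ℝ),
        (∑ m : Fin n, y ^ (2 * m.val) • ((d k m : 𝕜) / halfLineMoment h (2 * m))) *
          ((1 / a l) • h (y / a l)) =
      if k = l then 1 else 0 := by
  have sq_injective : Function.Injective fun i => a i ^ 2 := fun i j hij =>
    ha' ((sq_eq_sq₀ (ha i).le (ha j).le).1 hij)
  calc
    _ = ∑ m : Fin n, a l ^ (2 * m.val) • (d k m : 𝕜) :=
        integral_sum_div_halfLineMoment_mul_dilation (fun m _ => hmoment m) _ (ha l)
    _ = ((∑ m : Fin n, d k m * a l ^ (2 * m.val) : ℝ) : 𝕜) := by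
        simp only [RCLike.real_smul_eq_coe_mul, RCLike.ofReal_sum, RCLike.ofReal_mul, mul_comm]
    _ = ((if k = l then 1 else 0 : ℝ) : 𝕜) := by
        rw [← hd, prod_erase_sub_div_sub_eq_ite sq_injective.injOn (Finset.mem_univ k)
          (Finset.mem_univ l)]
    _ = if k = l then 1 else 0 := by
        rw [apply_ite RCLike.ofReal, RCLike.ofReal_one, RCLike.ofReal_zero]

end Moments

/-- Theorem 3.9: bi-orthonormality of the system built from the
Lagrange-type even polynomials `∏_{i≠k}(a_i²-y²)/(a_i²-a_k²)` and `y ↦ h(y/a_l)/a_l`. -/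
theorem biorthonormal_fixed_matrix (n : ℕ) (hn : 1 ≤ n)
    (a : Fin n → ℝ) (ha : ∀ j, 0 < a j) (ha' : Function.Injective a)
    (h : ℝ → ℝ) (hh0 : ∀ t : ℝ, 0 < t → 0 ≤ h t) (hhint : IntegrableOn h (Set.Ioi 0))
    (hmellpos : ∀ m ∈ Finset.range n, 0 < mellH h (2 * (m : ℝ) + 1))
    (hmellint : ∀ m ∈ Finset.range n,
      IntegrableOn (fun t : ℝ => h t * t ^ (2 * m : ℕ)) (Set.Ioi 0))
    (d : Fin n → Fin n → ℝ)
    (hd : ∀ (k : Fin n) (y : ℝ),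
      (∏ i ∈ Finset.univ.erase k, (((a i) ^ 2 - y ^ 2) / ((a i) ^ 2 - (a k) ^ 2))) =
        ∑ m : Fin n, d k m * y ^ (2 * m.val)) :
    ∀ k l : Fin n,
      (∫ y in Set.Ioi (0 : ℝ),
          (∑ m : Fin n, d k m / mellH h (2 * (m.val : ℝ) + 1) * y ^ (2 * m.val)) *
            ((1 / a l) * h (y / a l))) =
        if k = l then 1 else 0 := by
  have hmoment (m : Fin n) : halfLineMoment h (2 * m) ≠ 0 :=
    mellH_two_mul_add_one h m ▸ (hmellpos m (Finset.mem_range.2 m.2)).ne'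
  simpa [mellH_two_mul_add_one, mul_comm (_ ^ _)] using
    biorthonormal_fixed_matrix_general ha ha' hmoment hd

end
end

section
/- Let p > −1 be real and let 0 < a < 1. Then ∫_a^1 ((1 − t²)·(1 − a²/t²))^p dt = (√π · Γ(p+1) / (2·Γ(p + 3/2))) · (1 − a)^{2p+1}. -/
open MeasureTheory

noncomputable section

/-!
With `φ t = t - a / t`, the integrand is `((1 - a) ^ 2 - φ t ^ 2) ^ p`, a function of `φ t` which is
even in `φ t`. The involution `t ↦ a / t` of `[a, 1]` changes the sign of `φ`, so averaging over it
replaces `dt` by `(1 + a / t ^ 2) dt / 2 = dφ / 2`. Since `φ` maps `[a, 1]` onto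
`[-(1 - a), 1 - a]`, what remains is `∫ s in 0..(1 - a), ((1 - a) ^ 2 - s ^ 2) ^ p`, which is a
beta integral after `s = (1 - a) * √y`.
-/

lemma pos_of_mem_uIcc {α : Type*} [LinearOrder α] [Zero α] {a b t : α} (ha : 0 < a) (hb : 0 < b)
    (ht : t ∈ Set.uIcc a b) : 0 < t :=
  (lt_min ha hb).trans_le ht.1

section CauchySchlomilch

variable {E : Type*} [NormedAddCommGroup E] {f : ℝ → E} {a b c r t : ℝ}

lemma intervalIntegrable_neg_self_of_even (hf : f.Even)
    (hint : IntervalIntegrable f volume 0 r) : IntervalIntegrable f volume (-r) r := by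
  have hneg : IntervalIntegrable f volume 0 (-r) := by
    simpa [hf _] using (IntervalIntegrable.iff_comp_neg (f := f)).1 hint
  exact hneg.symm.trans hint

lemma hasDerivAt_const_div (c : ℝ) (ht : t ≠ 0) :
    HasDerivAt (fun t ↦ c / t) (-(c / t ^ 2)) t := by
  simpa [div_eq_mul_inv] using (hasDerivAt_inv ht).const_mul c

lemma hasDerivAt_sub_const_div (c : ℝ) (ht : t ≠ 0) :
    HasDerivAt (fun t ↦ t - c / t) (1 + c / t ^ 2) t := by
  simpa using (hasDerivAt_id' t).fun_sub (hasDerivAt_const_div c ht)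

lemma continuousOn_const_div_sq (c : ℝ) (ha : 0 < a) (hb : 0 < b) :
    ContinuousOn (fun t ↦ c / t ^ 2) (Set.uIcc a b) :=
  continuousOn_const.div (by fun_prop) fun _ ht ↦ (pow_pos (pos_of_mem_uIcc ha hb ht) 2).ne'

variable [NormedSpace ℝ E]

lemma integral_neg_self_of_even (hf : f.Even) (hint : IntervalIntegrable f volume 0 r) :
    ∫ s in -r..r, f s = (2 : ℝ) • ∫ s in 0..r, f s := by
  have hleft : ∫ s in -r..0, f s = ∫ s in 0..r, f s := by
    simpa [hf _] using (intervalIntegral.integral_comp_neg (a := 0) (b := r) f).symm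
  have hint_neg : IntervalIntegrable f volume (-r) 0 :=
    (intervalIntegrable_neg_self_of_even hf hint).trans hint.symm
  rw [← intervalIntegral.integral_add_adjacent_intervals hint_neg hint, hleft, two_smul]

lemma integral_div_sq_smul_comp_div (f : ℝ → E) (ha : 0 < a) (hb : 0 < b) (hc : 0 ≤ c) :
    ∫ t in a..b, (c / t ^ 2) • f (c / t) = ∫ s in (c / b)..(c / a), f s := by
  have hderiv : ∀ t ∈ Set.uIcc a b, HasDerivAt (fun t ↦ c / t) (-(c / t ^ 2)) t :=
    fun t ht ↦ hasDerivAt_const_div c (pos_of_mem_uIcc ha hb ht).ne'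
  have hsubst := intervalIntegral.integral_deriv_smul_comp_of_deriv_nonpos (g := f)
    (HasDerivAt.continuousOn hderiv) (fun t ht ↦ hderiv t (Set.Ioo_subset_Icc_self ht))
    fun t _ ↦ neg_nonpos.2 (by positivity)
  simpa [intervalIntegral.integral_symm (c / b) (c / a)] using hsubst

lemma integral_one_add_div_sq_smul_comp_sub_div (f : ℝ → E) (ha : 0 < a) (hb : 0 < b)
    (hc : 0 ≤ c) :
    ∫ t in a..b, (1 + c / t ^ 2) • f (t - c / t) = ∫ s in (a - c / a)..(b - c / b), f s := by
  have hderiv : ∀ t ∈ Set.uIcc a b, HasDerivAt (fun t ↦ t - c / t) (1 + c / t ^ 2) t :=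
    fun t ht ↦ hasDerivAt_sub_const_div c (pos_of_mem_uIcc ha hb ht).ne'
  exact intervalIntegral.integral_deriv_smul_comp_of_deriv_nonneg
    (HasDerivAt.continuousOn hderiv) (fun t ht ↦ hderiv t (Set.Ioo_subset_Icc_self ht))
    fun t _ ↦ by positivity

lemma intervalIntegrable_comp_sub_div (ha : 0 < a) (hb : 0 < b) (hc : 0 ≤ c)
    (hint : IntervalIntegrable f volume (a - c / a) (b - c / b)) :
    IntervalIntegrable (fun t ↦ f (t - c / t)) volume a b := by
  have hderiv : ∀ t ∈ Set.uIcc a b, HasDerivAt (fun t ↦ t - c / t) (1 + c / t ^ 2) t :=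
    fun t ht ↦ hasDerivAt_sub_const_div c (pos_of_mem_uIcc ha hb ht).ne'
  have hweight_pos : ∀ t : ℝ, 0 < 1 + c / t ^ 2 := fun t ↦ by positivity
  have hweighted : IntervalIntegrable (fun t ↦ (1 + c / t ^ 2) • f (t - c / t)) volume a b :=
    (intervalIntegral.integrable_deriv_smul_comp_iff_of_deriv_nonneg
      (HasDerivAt.continuousOn hderiv) (fun t ht ↦ hderiv t (Set.Ioo_subset_Icc_self ht))
      fun t _ ↦ (hweight_pos t).le).2 hint
  have hinv_cont : ContinuousOn (fun t ↦ (1 + c / t ^ 2)⁻¹) (Set.uIcc a b) :=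
    (continuousOn_const.add (continuousOn_const_div_sq c ha hb)).inv₀
      fun t _ ↦ (hweight_pos t).ne'
  simpa [inv_smul_smul₀ (hweight_pos _).ne'] using hweighted.continuousOn_smul hinv_cont

/-- The **Cauchy–Schlömilch transformation** on a bounded interval. -/
theorem integral_comp_sub_mul_div_of_even (hf : f.Even) (ha : 0 < a) (hb : 0 < b)
    (hint : IntervalIntegrable f volume 0 (b - a)) :
    ∫ t in a..b, f (t - a * b / t) = ∫ s in 0..(b - a), f s := by
  have hab : 0 ≤ a * b := by positivity
  have hleft : a - a * b / a = -(b - a) := by field_simp; ring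
  have hright : b - a * b / b = b - a := by field_simp
  have hcomp : IntervalIntegrable (fun t ↦ f (t - a * b / t)) volume a b :=
    intervalIntegrable_comp_sub_div ha hb hab
      (by simpa only [hleft, hright] using intervalIntegrable_neg_self_of_even hf hint)
  have hreflect : ∫ t in a..b, (a * b / t ^ 2) • f (t - a * b / t) =
      ∫ t in a..b, f (t - a * b / t) := by
    have heven : ∀ t, f (a * b / t - t) = f (t - a * b / t) := fun t ↦ by rw [← neg_sub, hf]
    simpa [heven, ha.ne', hb.ne'] using
      integral_div_sq_smul_comp_div (fun t ↦ f (t - a * b / t)) ha hb hab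
  have hdouble : (2 : ℝ) • ∫ t in a..b, f (t - a * b / t) = (2 : ℝ) • ∫ s in 0..(b - a), f s :=
    calc (2 : ℝ) • ∫ t in a..b, f (t - a * b / t)
      _ = (∫ t in a..b, f (t - a * b / t)) +
            ∫ t in a..b, (a * b / t ^ 2) • f (t - a * b / t) := by rw [hreflect, two_smul]
      _ = ∫ t in a..b, (1 + a * b / t ^ 2) • f (t - a * b / t) := by
        rw [← intervalIntegral.integral_add hcomp
          (hcomp.continuousOn_smul (continuousOn_const_div_sq _ ha hb))]
        simp only [add_smul, one_smul]
      _ = ∫ s in -(b - a)..(b - a), f s := by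
        rw [integral_one_add_div_sq_smul_comp_sub_div f ha hb hab, hleft, hright]
      _ = (2 : ℝ) • ∫ s in 0..(b - a), f s := integral_neg_self_of_even hf hint
  exact smul_right_injective E two_ne_zero hdouble

end CauchySchlomilch

section BetaIntegrals

variable {α β p r : ℝ}

lemma integral_rpow_mul_one_sub_rpow (hα : 0 < α) (hβ : 0 < β) :
    ∫ x in (0 : ℝ)..1, x ^ (α - 1) * (1 - x) ^ (β - 1) = ProbabilityTheory.beta α β := by
  have hcast : Complex.betaIntegral α β =
      ∫ x in (0 : ℝ)..1, ((x ^ (α - 1) * (1 - x) ^ (β - 1) : ℝ) : ℂ) := by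
    refine intervalIntegral.integral_congr fun x hx ↦ ?_
    rw [Set.uIcc_of_le zero_le_one] at hx
    simp [Complex.ofReal_cpow hx.1, Complex.ofReal_cpow (sub_nonneg.2 hx.2)]
  rw [ProbabilityTheory.beta_eq_betaIntegralReal α β hα hβ, hcast,
    intervalIntegral.integral_ofReal, Complex.ofReal_re]

lemma integral_rpow_mul_one_sub_sq_rpow (hα : 0 < α) (hβ : 0 < β) :
    ∫ x in (0 : ℝ)..1, x ^ (2 * α - 1) * (1 - x ^ 2) ^ (β - 1) =
      ProbabilityTheory.beta α β / 2 := by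
  have hsubst : ∫ x in (0 : ℝ)..1, (2 * x) * ((x ^ 2) ^ (α - 1) * (1 - x ^ 2) ^ (β - 1)) =
      ProbabilityTheory.beta α β := by
    have hsq := intervalIntegral.integral_deriv_smul_comp_of_deriv_nonneg (a := 0) (b := 1)
      (f := fun x : ℝ ↦ x ^ 2) (f' := fun x ↦ 2 * x)
      (g := fun y ↦ y ^ (α - 1) * (1 - y) ^ (β - 1)) (by fun_prop)
      (fun x _ ↦ by simpa using hasDerivAt_pow 2 x) (by simp +contextual [le_of_lt])
    simpa [integral_rpow_mul_one_sub_rpow hα hβ] using hsq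
  have hpow : ∀ x ∈ Set.Ioo (0 : ℝ) 1,
      (2 * x) * ((x ^ 2) ^ (α - 1) * (1 - x ^ 2) ^ (β - 1)) =
        2 * (x ^ (2 * α - 1) * (1 - x ^ 2) ^ (β - 1)) := fun x hx ↦ by
    have hx_pow : x * (x ^ 2) ^ (α - 1) = x ^ (2 * α - 1) := by
      rw [← Real.rpow_natCast_mul hx.1.le, mul_comm, ← Real.rpow_add_one hx.1.ne']
      congr 1
      push_cast
      ring
    rw [← hx_pow]
    ring
  rw [← hsubst, intervalIntegral.integral_congr_Ioo_of_le zero_le_one hpow,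
    intervalIntegral.integral_const_mul, mul_div_cancel_left₀ _ two_ne_zero]

lemma beta_half_left (β : ℝ) :
    ProbabilityTheory.beta (1 / 2) β = √Real.pi * Real.Gamma β / Real.Gamma (β + 1 / 2) := by
  rw [ProbabilityTheory.beta, Real.Gamma_one_half_eq, add_comm]

lemma integral_one_sub_sq_rpow (hp : -1 < p) :
    ∫ x in (0 : ℝ)..1, (1 - x ^ 2) ^ p =
      √Real.pi * Real.Gamma (p + 1) / (2 * Real.Gamma (p + 3 / 2)) := by
  have hbeta := integral_rpow_mul_one_sub_sq_rpow one_half_pos (neg_lt_iff_pos_add.1 hp)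
  rw [beta_half_left, show p + 1 + 1 / 2 = p + 3 / 2 by ring, div_div, mul_comm _ (2 : ℝ)] at hbeta
  simpa using hbeta

lemma integral_sq_sub_sq_rpow (hp : -1 < p) (hr : 0 < r) :
    ∫ s in 0..r, (r ^ 2 - s ^ 2) ^ p =
      √Real.pi * Real.Gamma (p + 1) / (2 * Real.Gamma (p + 3 / 2)) * r ^ (2 * p + 1) := by
  have hscale : ∀ x ∈ Set.uIcc (0 : ℝ) 1,
      (r ^ 2 - (r * x) ^ 2) ^ p = r ^ (2 * p) * (1 - x ^ 2) ^ p := fun x hx ↦ by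
    rw [Set.uIcc_of_le zero_le_one] at hx
    rw [show r ^ 2 - (r * x) ^ 2 = r ^ 2 * (1 - x ^ 2) by ring,
      Real.mul_rpow (by positivity) (sub_nonneg.2 (pow_le_one₀ hx.1 hx.2)),
      ← Real.rpow_natCast_mul hr.le, Nat.cast_ofNat]
  calc ∫ s in 0..r, (r ^ 2 - s ^ 2) ^ p
    _ = r * ∫ x in (0 : ℝ)..1, (r ^ 2 - (r * x) ^ 2) ^ p := by
      simpa using (intervalIntegral.smul_integral_comp_mul_left (a := 0) (b := 1)
        (fun s ↦ (r ^ 2 - s ^ 2) ^ p) r).symm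
    _ = r ^ (2 * p + 1) * ∫ x in (0 : ℝ)..1, (1 - x ^ 2) ^ p := by
      rw [intervalIntegral.integral_congr hscale, intervalIntegral.integral_const_mul,
        Real.rpow_add_one hr.ne']
      ring
    _ = _ := by rw [integral_one_sub_sq_rpow hp, mul_comm]

lemma intervalIntegrable_sq_sub_sq_rpow (hp : -1 < p) (hr : 0 < r) :
    IntervalIntegrable (fun s ↦ (r ^ 2 - s ^ 2) ^ p) volume 0 r := by
  refine intervalIntegral.intervalIntegrable_of_integral_ne_zero ?_
  have hΓ₁ : 0 < Real.Gamma (p + 1) := Real.Gamma_pos_of_pos (by linarith)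
  have hΓ₂ : 0 < Real.Gamma (p + 3 / 2) := Real.Gamma_pos_of_pos (by linarith)
  rw [integral_sq_sub_sq_rpow hp hr]
  positivity

end BetaIntegrals

lemma sq_sub_sq_mul_one_sub_sq_div_sq {K : Type*} [Field K] (a b : K) {t : K} (ht : t ≠ 0) :
    (b ^ 2 - t ^ 2) * (1 - a ^ 2 / t ^ 2) = (b - a) ^ 2 - (t - a * b / t) ^ 2 := by
  field_simp
  ring

/-- the integral evaluation in the proof of Corollary 4.2:
`∫_a^1 ((1-t²)(1-a²/t²))^p dt = √π Γ(p+1)/(2 Γ(p+3/2)) (1-a)^{2p+1}`. -/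
theorem boole_type_integral (p : ℝ) (hp : -1 < p) (a : ℝ) (ha : 0 < a) (ha1 : a < 1) :
    (∫ t in a..1, ((1 - t ^ 2) * (1 - a ^ 2 / t ^ 2)) ^ p) =
      (Real.sqrt Real.pi * Real.Gamma (p + 1) / (2 * Real.Gamma (p + 3 / 2))) *
        (1 - a) ^ (2 * p + 1) := by
  have hr : 0 < 1 - a := sub_pos.2 ha1
  have heven : (fun s : ℝ ↦ ((1 - a) ^ 2 - s ^ 2) ^ p).Even := fun s ↦ by simp only [neg_sq]
  calc ∫ t in a..1, ((1 - t ^ 2) * (1 - a ^ 2 / t ^ 2)) ^ p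
    _ = ∫ t in a..1, ((1 - a) ^ 2 - (t - a * 1 / t) ^ 2) ^ p := by
      refine intervalIntegral.integral_congr fun t ht ↦ ?_
      simp only [← sq_sub_sq_mul_one_sub_sq_div_sq a 1 (pos_of_mem_uIcc ha one_pos ht).ne', one_pow]
    _ = ∫ s in 0..(1 - a), ((1 - a) ^ 2 - s ^ 2) ^ p :=
      integral_comp_sub_mul_div_of_even heven ha one_pos (intervalIntegrable_sq_sub_sq_rpow hp hr)
    _ = _ := integral_sq_sub_sq_rpow hp hr

end
end
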